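/- arXiv:1306.5434 — 3 statements merged into one kernel-verified Lean document; each statement's English description precedes it below -/
import Mathlib

section
/- There is a universal constant C ∈ (0,∞) such that the following holds. Fix β ∈ (0,π] and n ∈ ℕ. Let (X,d_X) be a metric space and suppose A,B ⊆ X satisfy A ∪ B = X and d_X(A∖B, B∖A) ≥ β. Then every n×n symmetric stochastic matrix M satisfies γ₊(M, d_{Cone(X)}²) ≤ C·(γ₊(M, d_{Cone(A)}²) + γ₊(M, d_{Cone(B)}²))/β⁴, where Cone(A) and Cone(B) are the Euclidean cones over A and B equipped with the metrics d_X restricted to A and B, respectively. -/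
/-!
Statement 11 (Lemma 3.11 of Mendel–Naor, unions of cones): there is a universal
constant `C` such that if `X = A ∪ B` with `d_X(A∖B, B∖A) ≥ β` for some
`β ∈ (0,π]`, then every `n×n` symmetric stochastic matrix `M` satisfies
`γ₊(M, d_{Cone(X)}²) ≤ C·(γ₊(M, d_{Cone(A)}²) + γ₊(M, d_{Cone(B)}²))/β⁴`.

The Euclidean cone over a (sub)space is realized as `(0,∞) ×` that space, with the
cone metric.
-/

open ENNReal

noncomputable section

/-- The squared distance, valued in `ℝ≥0∞`. -/
def sqd {Z : Type*} (dZ : Z → Z → ℝ) (a b : Z) : ℝ≥0∞ :=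
  ENNReal.ofReal (dZ a b) ^ 2

/-- The nonlinear absolute spectral gap quantity `γ₊(M, d_Z²)` of a `n × n`
symmetric stochastic matrix `M`. -/
def gammaPlusM {n : ℕ} {Z : Type*} (M : Matrix (Fin n) (Fin n) ℝ) (dZ : Z → Z → ℝ) : ℝ≥0∞ :=
  sInf {γ : ℝ≥0∞ | ∀ x y : Fin n → Z,
    (∑ i, ∑ j, sqd dZ (x i) (y j)) / (n : ℝ≥0∞) ^ 2 ≤
      γ / (n : ℝ≥0∞) * ∑ i, ∑ j, ENNReal.ofReal (M i j) * sqd dZ (x i) (y j)}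

/-- The Euclidean cone distance over a space with distance function `dX`:
`d((s,x),(t,y)) = √(s² + t² − 2 s t cos(min{π, d_X(x,y)}))`. -/
def coneDist {X : Type*} (dX : X → X → ℝ) (p q : ℝ × X) : ℝ :=
  Real.sqrt (p.1 ^ 2 + q.1 ^ 2 - 2 * p.1 * q.1 * Real.cos (min Real.pi (dX p.2 q.2)))

/-- The point set of the Euclidean cone over `X` (minus the cusp): `(0,∞) × X`. -/
def Cone (X : Type*) : Type _ :=
  {p : ℝ × X // 0 < p.1}

/-- The cone distance on `Cone X`. -/
def coneD {X : Type*} (dX : X → X → ℝ) (p q : Cone X) : ℝ :=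
  coneDist dX p.1 q.1

/-!
Both cones receive Lipschitz images of `Cone(X)`, and the two images together remember everything.
Since `A \ B` and `B \ A` are `β`-separated, there is a `1/β`-Lipschitz function `f : X → [0,1]`
vanishing on `A \ B` and equal to `1` on `B \ A` (`exists_cutoff`). Consider the maps
`F_A (s,x) = ((1 - f x) s, x)` into `Cone(A)` and `F_B (s,x) = (f x · s, x)` into `Cone(B)`, where
points whose new radius vanishes go to the cusp. Each of them is `O(1/β)`-Lipschitz
(`coneSq_scale_le`), while `d(z,w)² ≤ 2 (d(F_A z, F_A w)² + d(F_B z, F_B w)²)`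
(`coneSq_le_split`). Applying the spectral gap inequalities of `Cone(A)` and `Cone(B)` to the images
and adding them up gives the claim, even with `β²` in place of `β⁴`.

The cusp does not belong to `Cone`; the inequality for configurations that use it follows by adding
`ε` to all radii and letting `ε → 0` (`gap_of_support`).
-/

/-- The squared distance of two points of a cone with radii `s`, `t`, as a function of the cosine
`c` of their (truncated) angle. -/
def coneSq (s t c : ℝ) : ℝ := s ^ 2 + t ^ 2 - 2 * s * t * c

/-- The cosine of the truncated distance, as it appears in the cone metric. -/
def angCos {X : Type*} [MetricSpace X] (x y : X) : ℝ := Real.cos (min Real.pi (dist x y))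

lemma coneSq_nonneg {s t c : ℝ} (hs : 0 ≤ s) (ht : 0 ≤ t) (hc : c ≤ 1) : 0 ≤ coneSq s t c := by
  unfold coneSq
  nlinarith [sq_nonneg (s - t), mul_nonneg (mul_nonneg hs ht) (sub_nonneg.2 hc)]

/-- The pair of rescaled points controls the original pair. Both sides are affine in `c`, so it
is enough to compare them at `c = 1` and `c = -1`, where the claim is
`(x + y) ^ 2 ≤ 2 * (x ^ 2 + y ^ 2)`. -/
lemma coneSq_le_split {s t c : ℝ} (f g : ℝ) (hc : c ≤ 1) (hc' : -1 ≤ c) :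
    coneSq s t c ≤
      2 * (coneSq ((1 - f) * s) ((1 - g) * t) c + coneSq (f * s) (g * t) c) := by
  unfold coneSq
  have e1 := mul_nonneg (by linarith : 0 ≤ (1 + c) / 2)
    (sq_nonneg (((1 - f) * s - (1 - g) * t) - (f * s - g * t)))
  have e2 := mul_nonneg (by linarith : 0 ≤ (1 - c) / 2)
    (sq_nonneg (((1 - f) * s + (1 - g) * t) - (f * s + g * t)))
  nlinarith

/-- In terms of the truncated angle `θ`, the difference is at most `θ / β`: where `d` exceeds `π`
this uses `β ≤ π`. The claim follows by Jordan's bound `cos θ ≤ 1 - 2 θ² / π²`. -/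
lemma sub_sq_le_of_lipschitz {a b d β : ℝ} (hβ : 0 < β) (hβπ : β ≤ Real.pi) (hd : 0 ≤ d)
    (ha0 : 0 ≤ a) (ha1 : a ≤ 1) (hb0 : 0 ≤ b) (hb1 : b ≤ 1) (hab : |a - b| ≤ d / β) :
    (a - b) ^ 2 ≤ Real.pi ^ 2 / (2 * β ^ 2) * (1 - Real.cos (min Real.pi d)) := by
  have hπ := Real.pi_pos
  set θ := min Real.pi d with hθ
  have hθ0 : 0 ≤ θ := le_min hπ.le hd
  have h1 : |a - b| ≤ θ / β := by
    rcases le_total Real.pi d with h | h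
    · rw [hθ, min_eq_left h]
      refine le_trans (abs_le.2 ⟨by linarith, by linarith⟩) ((one_le_div hβ).2 hβπ)
    · rw [hθ, min_eq_right h]; exact hab
  have h2 : (a - b) ^ 2 ≤ (θ / β) ^ 2 := by
    rw [← sq_abs (a - b)]; gcongr
  have h3 : Real.cos θ ≤ 1 - 2 / Real.pi ^ 2 * θ ^ 2 :=
    Real.cos_le_one_sub_mul_cos_sq (by rw [abs_of_nonneg hθ0]; exact min_le_left _ _)
  refine h2.trans ?_
  have h4 : 2 / Real.pi ^ 2 * θ ^ 2 ≤ 1 - Real.cos θ := by linarith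
  calc (θ / β) ^ 2 = Real.pi ^ 2 / (2 * β ^ 2) * (2 / Real.pi ^ 2 * θ ^ 2) := by field_simp
    _ ≤ _ := by gcongr

/-- Multiplying the radius by a `1/β`-Lipschitz function with values in `[0,1]` is a
`√3 π / β`-Lipschitz operation on the cone. -/
lemma coneSq_scale_le {s t a b d β : ℝ} (hs : 0 ≤ s) (ht : 0 ≤ t) (hβ : 0 < β)
    (hβπ : β ≤ Real.pi) (hd : 0 ≤ d)
    (ha0 : 0 ≤ a) (ha1 : a ≤ 1) (hb0 : 0 ≤ b) (hb1 : b ≤ 1) (hab : |a - b| ≤ d / β) :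
    coneSq (a * s) (b * t) (Real.cos (min Real.pi d)) ≤
      3 * (Real.pi ^ 2 / β ^ 2) * coneSq s t (Real.cos (min Real.pi d)) := by
  have key := sub_sq_le_of_lipschitz hβ hβπ hd ha0 ha1 hb0 hb1 hab
  have hK : 1 ≤ Real.pi ^ 2 / β ^ 2 := by
    rw [one_le_div (by positivity)]; gcongr
  have hKe : Real.pi ^ 2 / (2 * β ^ 2) = Real.pi ^ 2 / β ^ 2 / 2 := by field_simp
  rw [hKe] at key
  set K := Real.pi ^ 2 / β ^ 2
  have hc := Real.cos_le_one (min Real.pi d)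
  set c := Real.cos (min Real.pi d)
  have hst := mul_nonneg hs ht
  have hu : 0 ≤ s * t * (1 - c) := mul_nonneg hst (by linarith)
  -- Charge the variation of the multiplier to the smaller radius, whose square is at most `s * t`.
  have hrad : (a * s - b * t) ^ 2 ≤ 2 * (s - t) ^ 2 + 2 * (s * t) * (a - b) ^ 2 := by
    rcases le_total s t with h | h
    · have e1 : (a * s - b * t) ^ 2 ≤ 2 * (b * (s - t)) ^ 2 + 2 * (s * (a - b)) ^ 2 := by
        nlinarith [sq_nonneg (b * (s - t) - s * (a - b))]
      have e2 : b ^ 2 * (s - t) ^ 2 ≤ 1 * (s - t) ^ 2 := by gcongr; nlinarith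
      have e3 : s * s * (a - b) ^ 2 ≤ s * t * (a - b) ^ 2 := by gcongr
      nlinarith
    · have e1 : (a * s - b * t) ^ 2 ≤ 2 * (a * (s - t)) ^ 2 + 2 * (t * (a - b)) ^ 2 := by
        nlinarith [sq_nonneg (a * (s - t) - t * (a - b))]
      have e2 : a ^ 2 * (s - t) ^ 2 ≤ 1 * (s - t) ^ 2 := by gcongr; nlinarith
      have e3 : t * t * (a - b) ^ 2 ≤ s * t * (a - b) ^ 2 := by gcongr
      nlinarith
  have hang : s * t * (a - b) ^ 2 ≤ s * t * (K / 2 * (1 - c)) := by gcongr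
  have hab1 : a * b * (s * t * (1 - c)) ≤ 1 * (s * t * (1 - c)) := by
    gcongr; nlinarith
  have hK1 : 0 ≤ (K - 1) * (s - t) ^ 2 := mul_nonneg (by linarith) (sq_nonneg _)
  have hK2 : 0 ≤ (K - 1) * (s * t * (1 - c)) := mul_nonneg (by linarith) hu
  unfold coneSq
  nlinarith [sq_nonneg (s - t)]

/-- A `1/β`-Lipschitz `f : X → [0,1]` with `f = 0` on `A \ B` and `f = 1` on `B \ A`, the last two
properties in contrapositive form. The case `A \ B = ∅` is separate because `Metric.infDist` to the
empty set is `0`. -/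
lemma exists_cutoff {X : Type*} [MetricSpace X] {A B : Set X} {β : ℝ} (hβ : 0 < β)
    (hAB : A ∪ B = Set.univ) (hsep : ∀ a ∈ A \ B, ∀ b ∈ B \ A, β ≤ dist a b) :
    ∃ f : X → ℝ, (∀ x, 0 ≤ f x) ∧ (∀ x, f x ≤ 1) ∧ (∀ x y, |f x - f y| ≤ dist x y / β) ∧
      (∀ x, 1 - f x ≠ 0 → x ∈ A) ∧ (∀ x, f x ≠ 0 → x ∈ B) := by
  have hmem : ∀ x, x ∈ A ∨ x ∈ B := fun x => by
    have : x ∈ A ∪ B := hAB ▸ Set.mem_univ x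
    exact this
  rcases (A \ B).eq_empty_or_nonempty with he | hne
  · refine ⟨fun _ => 1, by simp, by simp, fun x y => by simp; positivity, by simp, fun x _ => ?_⟩
    have : x ∉ A \ B := by simp [he]
    rcases hmem x with h | h
    · by_contra hx; exact this ⟨h, hx⟩
    · exact h
  · have hL : ∀ x y, |Metric.infDist x (A \ B) - Metric.infDist y (A \ B)| ≤ dist x y := by
      intro x y
      have := (Metric.lipschitz_infDist_pt (A \ B)).dist_le_mul x y
      simpa [Real.dist_eq] using this
    refine ⟨fun x => min 1 (Metric.infDist x (A \ B) / β),
      fun x => le_min zero_le_one (div_nonneg Metric.infDist_nonneg hβ.le),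
      fun x => min_le_left _ _, fun x y => ?_, fun x hx => ?_, fun x hx => ?_⟩
    · refine (abs_min_sub_min_le_max _ _ _ _).trans ?_
      rw [← sub_div, abs_div, abs_of_pos hβ]
      refine max_le (by simp; positivity) ?_
      gcongr
      exact hL x y
    · by_contra hxA
      have hxB : x ∈ B := (hmem x).resolve_left hxA
      apply hx
      have : β ≤ Metric.infDist x (A \ B) :=
        (Metric.le_infDist hne).2 fun a ha => by
          rw [dist_comm]; exact hsep a ha x ⟨hxB, hxA⟩
      exact sub_eq_zero.2 (min_eq_left ((one_le_div hβ).2 this)).symm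
    · by_contra hxB
      have hxA : x ∈ A := (hmem x).resolve_right hxB
      apply hx
      have : Metric.infDist x (A \ B) = 0 := Metric.infDist_zero_of_mem ⟨hxA, hxB⟩
      simp [this]

lemma angCos_le_one {X : Type*} [MetricSpace X] (x y : X) : angCos x y ≤ 1 := Real.cos_le_one _

lemma sqd_coneD {X : Type*} [MetricSpace X] (p q : Cone X) :
    sqd (coneD (dist : X → X → ℝ)) p q =
      ENNReal.ofReal (coneSq p.1.1 q.1.1 (angCos p.1.2 q.1.2)) := by
  have h := coneSq_nonneg p.2.le q.2.le (angCos_le_one p.1.2 q.1.2)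
  unfold sqd coneD coneDist
  rw [← ENNReal.ofReal_pow (Real.sqrt_nonneg _), Real.sq_sqrt]
  · rfl
  · exact h

/-- The spectral gap inequality with a finite constant `g` for one configuration in a cone, as an
inequality between real numbers. -/
lemma gap_ineq_iff {X : Type*} [MetricSpace X] {n : ℕ} (hn : n ≠ 0)
    {M : Matrix (Fin n) (Fin n) ℝ} (hM : ∀ i j, 0 ≤ M i j) {g : ℝ} (hg : 0 ≤ g)
    (x y : Fin n → Cone X) :
    (∑ i, ∑ j, sqd (coneD (dist : X → X → ℝ)) (x i) (y j)) / (n : ℝ≥0∞) ^ 2 ≤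
        ENNReal.ofReal g / (n : ℝ≥0∞) *
          ∑ i, ∑ j, ENNReal.ofReal (M i j) * sqd (coneD (dist : X → X → ℝ)) (x i) (y j) ↔
      (∑ i, ∑ j, coneSq (x i).1.1 (y j).1.1 (angCos (x i).1.2 (y j).1.2)) / (n : ℝ) ^ 2 ≤
        g / n * ∑ i, ∑ j, M i j * coneSq (x i).1.1 (y j).1.1 (angCos (x i).1.2 (y j).1.2) := by
  have h : ∀ i j, 0 ≤ coneSq (x i).1.1 (y j).1.1 (angCos (x i).1.2 (y j).1.2) := fun i j =>
    coneSq_nonneg (x i).2.le (y j).2.le (angCos_le_one _ _)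
  have hn' : (0 : ℝ) < n := by exact_mod_cast Nat.pos_of_ne_zero hn
  have hnE : (n : ℝ≥0∞) = ENNReal.ofReal n := by simp
  simp only [sqd_coneD, ← ENNReal.ofReal_mul (hM _ _)]
  have s1 : ∀ F : Fin n → Fin n → ℝ, (∀ i j, 0 ≤ F i j) →
      ∑ i, ∑ j, ENNReal.ofReal (F i j) = ENNReal.ofReal (∑ i, ∑ j, F i j) := by
    intro F hF
    rw [ENNReal.ofReal_sum_of_nonneg fun i _ => Finset.sum_nonneg fun j _ => hF i j]
    refine Finset.sum_congr rfl fun i _ => ?_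
    rw [ENNReal.ofReal_sum_of_nonneg fun j _ => hF i j]
  rw [s1 _ h, s1 _ fun i j => mul_nonneg (hM i j) (h i j), hnE, ← ENNReal.ofReal_pow hn'.le,
    ← ENNReal.ofReal_div_of_pos (by positivity), ← ENNReal.ofReal_div_of_pos hn',
    ← ENNReal.ofReal_mul (by positivity), ENNReal.ofReal_le_ofReal_iff]
  exact mul_nonneg (by positivity)
    (Finset.sum_nonneg fun i _ => Finset.sum_nonneg fun j _ => mul_nonneg (hM i j) (h i j))

/-- A finite `γ₊` of `Cone(A)` gives the spectral gap inequality for all configurations over `X` in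
which every point with nonzero radius lies over `A`. Points of radius zero are at the cusp, so their
second coordinate is irrelevant; moving them to radius `ε` and letting `ε → 0` brings them into
`Cone A`, and the same limit makes up for the infimum in `gammaPlusM` not being known to be
attained. -/
lemma gap_of_support {X : Type*} [MetricSpace X] {A : Set X} {n : ℕ} (hn : n ≠ 0)
    {M : Matrix (Fin n) (Fin n) ℝ} (hM : ∀ i j, 0 ≤ M i j)
    (hfin : gammaPlusM M (coneD (dist : ↥A → ↥A → ℝ)) ≠ ∞)
    {s t : Fin n → ℝ} {x y : Fin n → X} (hs : ∀ i, 0 ≤ s i) (ht : ∀ i, 0 ≤ t i)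
    (hx : ∀ i, s i ≠ 0 → x i ∈ A) (hy : ∀ i, t i ≠ 0 → y i ∈ A) :
    (∑ i, ∑ j, coneSq (s i) (t j) (angCos (x i) (y j))) / (n : ℝ) ^ 2 ≤
      (gammaPlusM M (coneD (dist : ↥A → ↥A → ℝ))).toReal / n *
        ∑ i, ∑ j, M i j * coneSq (s i) (t j) (angCos (x i) (y j)) := by
  classical
  rcases A.eq_empty_or_nonempty with he | ⟨a₀, ha₀⟩
  · have hs0 : ∀ i, s i = 0 := fun i => by
      by_contra h; simpa [he] using hx i h
    have ht0 : ∀ i, t i = 0 := fun i => by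
      by_contra h; simpa [he] using hy i h
    simp [hs0, ht0, coneSq]
  · set g := (gammaPlusM M (coneD (dist : ↥A → ↥A → ℝ))).toReal with hg
    have hg0 : 0 ≤ g := ENNReal.toReal_nonneg
    let r : X → A := fun x => if h : x ∈ A then ⟨x, h⟩ else ⟨a₀, ha₀⟩
    have hr : ∀ x ∈ A, (r x : X) = x := fun x h => by simp [r, h]
    have hsame : ∀ i j, coneSq (s i) (t j) (angCos (x i) (y j)) =
        coneSq (s i) (t j) (angCos (r (x i)) (r (y j))) := by
      intro i j
      by_cases h1 : s i = 0
      · simp [coneSq, h1]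
      by_cases h2 : t j = 0
      · simp [coneSq, h2]
      have : angCos (r (x i)) (r (y j)) = angCos (x i) (y j) := by
        unfold angCos
        rw [Subtype.dist_eq, hr _ (hx i h1), hr _ (hy j h2)]
      rw [this]
    simp only [hsame]
    have key : ∀ ε : ℝ, 0 < ε →
        (∑ i, ∑ j, coneSq (s i + ε) (t j + ε) (angCos (r (x i)) (r (y j)))) / (n : ℝ) ^ 2 ≤
          (g + ε) / n *
            ∑ i, ∑ j, M i j * coneSq (s i + ε) (t j + ε) (angCos (r (x i)) (r (y j))) := by
      intro ε hε
      have hlt : gammaPlusM M (coneD (dist : ↥A → ↥A → ℝ)) < ENNReal.ofReal (g + ε) := by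
        rw [ENNReal.lt_ofReal_iff_toReal_lt hfin]; linarith
      obtain ⟨γ, hγ, hγlt⟩ := sInf_lt_iff.1 hlt
      let u : Fin n → Cone A := fun i => ⟨(s i + ε, r (x i)), add_pos_of_nonneg_of_pos (hs i) hε⟩
      let v : Fin n → Cone A := fun i => ⟨(t i + ε, r (y i)), add_pos_of_nonneg_of_pos (ht i) hε⟩
      have h := (hγ u v).trans
        (mul_le_mul_left (ENNReal.div_le_div_right hγlt.le (n : ℝ≥0∞)) _)
      exact (gap_ineq_iff hn hM (add_nonneg hg0 hε.le) u v).1 h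
    have hlim : ∀ F : ℝ → ℝ, Continuous F →
        Filter.Tendsto F (nhdsWithin 0 (Set.Ioi 0)) (nhds (F 0)) := fun F hF =>
      (hF.tendsto 0).mono_left nhdsWithin_le_nhds
    have l1 := hlim (fun ε => (∑ i, ∑ j, coneSq (s i + ε) (t j + ε)
      (angCos (r (x i)) (r (y j)))) / (n : ℝ) ^ 2) (by unfold coneSq; fun_prop)
    have l2 := hlim (fun ε => (g + ε) / n * ∑ i, ∑ j, M i j * coneSq (s i + ε) (t j + ε)
      (angCos (r (x i)) (r (y j)))) (by unfold coneSq; fun_prop)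
    have := le_of_tendsto_of_tendsto l1 l2
      (by filter_upwards [self_mem_nhdsWithin] with ε hε using key ε hε)
    simpa only [add_zero] using this

theorem statement11 :
    ∃ C : ℝ, 0 < C ∧
      ∀ (β : ℝ), 0 < β → β ≤ Real.pi →
      ∀ (n : ℕ) (X : Type*) [MetricSpace X] (A B : Set X),
        A ∪ B = Set.univ →
        (∀ a ∈ A \ B, ∀ b ∈ B \ A, β ≤ dist a b) →
        ∀ M : Matrix (Fin n) (Fin n) ℝ,
          M.IsSymm → (∀ i j, 0 ≤ M i j) → (∀ i, ∑ j, M i j = 1) →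
          gammaPlusM M (coneD (dist : X → X → ℝ)) ≤
            ENNReal.ofReal C *
              (gammaPlusM M (coneD (dist : ↥A → ↥A → ℝ)) +
                gammaPlusM M (coneD (dist : ↥B → ↥B → ℝ))) /
              ENNReal.ofReal (β ^ 4) := by
  have hπ := Real.pi_pos
  refine ⟨6 * Real.pi ^ 4, by positivity, ?_⟩
  intro β hβ hβπ n X _ A B hAB hsep M _ hM _
  rcases eq_or_ne n 0 with rfl | hn
  · refine le_trans (sInf_le (a := 0) ?_) bot_le
    intro x y
    simp
  set GA := gammaPlusM M (coneD (dist : ↥A → ↥A → ℝ))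
  set GB := gammaPlusM M (coneD (dist : ↥B → ↥B → ℝ))
  by_cases hfin : GA + GB = ∞
  · rw [hfin, ENNReal.mul_top (by simp; positivity), ENNReal.top_div_of_ne_top (by simp)]
    exact le_top
  obtain ⟨hA, hB⟩ : GA ≠ ∞ ∧ GB ≠ ∞ := by simpa [not_or] using hfin
  have hrhs : ENNReal.ofReal (6 * Real.pi ^ 4) * (GA + GB) / ENNReal.ofReal (β ^ 4) =
      ENNReal.ofReal (6 * Real.pi ^ 4 * (GA.toReal + GB.toReal) / β ^ 4) := by
    rw [ENNReal.ofReal_div_of_pos (by positivity), ENNReal.ofReal_mul (p := 6 * Real.pi ^ 4) (by positivity),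
      ENNReal.ofReal_add ENNReal.toReal_nonneg ENNReal.toReal_nonneg, ENNReal.ofReal_toReal hA,
      ENNReal.ofReal_toReal hB]
  rw [hrhs]
  have hgA : 0 ≤ GA.toReal := ENNReal.toReal_nonneg
  have hgB : 0 ≤ GB.toReal := ENNReal.toReal_nonneg
  refine sInf_le fun x y => ?_
  rw [gap_ineq_iff hn hM (by positivity)]
  obtain ⟨f, hf0, hf1, hfL, hfA, hfB⟩ := exists_cutoff hβ hAB hsep
  have hs := fun i => (x i).2.le
  have ht := fun i => (y i).2.le
  generalize hsd : (fun i => (x i).1.1) = s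
  generalize htd : (fun i => (y i).1.1) = t
  generalize hpd : (fun i => (x i).1.2) = p
  generalize hqd : (fun i => (y i).1.2) = q
  simp only [funext_iff] at hsd htd hpd hqd
  simp only [hsd, htd, hpd, hqd] at hs ht ⊢
  have iA := gap_of_support hn hM hA (s := fun i => (1 - f (p i)) * s i)
    (t := fun i => (1 - f (q i)) * t i) (x := p) (y := q)
    (fun i => mul_nonneg (sub_nonneg.2 (hf1 _)) (hs i))
    (fun i => mul_nonneg (sub_nonneg.2 (hf1 _)) (ht i))
    (fun i h => hfA _ (left_ne_zero_of_mul h)) (fun i h => hfA _ (left_ne_zero_of_mul h))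
  have iB := gap_of_support hn hM hB (s := fun i => f (p i) * s i)
    (t := fun i => f (q i) * t i) (x := p) (y := q)
    (fun i => mul_nonneg (hf0 _) (hs i)) (fun i => mul_nonneg (hf0 _) (ht i))
    (fun i h => hfB _ (left_ne_zero_of_mul h)) (fun i h => hfB _ (left_ne_zero_of_mul h))
  have uA : ∀ i j, coneSq ((1 - f (p i)) * s i) ((1 - f (q j)) * t j) (angCos (p i) (q j)) ≤
      3 * (Real.pi ^ 2 / β ^ 2) * coneSq (s i) (t j) (angCos (p i) (q j)) := fun i j =>
    coneSq_scale_le (hs i) (ht j) hβ hβπ dist_nonneg (by linarith [hf1 (p i)])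
      (by linarith [hf0 (p i)]) (by linarith [hf1 (q j)]) (by linarith [hf0 (q j)])
      (by rw [_root_.sub_sub_sub_cancel_left, abs_sub_comm]; exact hfL _ _)
  have uB : ∀ i j, coneSq (f (p i) * s i) (f (q j) * t j) (angCos (p i) (q j)) ≤
      3 * (Real.pi ^ 2 / β ^ 2) * coneSq (s i) (t j) (angCos (p i) (q j)) := fun i j =>
    coneSq_scale_le (hs i) (ht j) hβ hβπ dist_nonneg (hf0 _) (hf1 _) (hf0 _) (hf1 _) (hfL _ _)
  set K := Real.pi ^ 2 / β ^ 2 with hK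
  have hK1 : 1 ≤ K := by
    rw [hK, one_le_div (by positivity)]; gcongr
  set E := ∑ i, ∑ j, M i j * coneSq (s i) (t j) (angCos (p i) (q j)) with hE
  have hE0 : 0 ≤ E := Finset.sum_nonneg fun i _ => Finset.sum_nonneg fun j _ =>
    mul_nonneg (hM i j) (coneSq_nonneg (hs i) (ht j) (angCos_le_one _ _))
  have hsum : ∀ F : Fin n → Fin n → ℝ,
      (∀ i j, F i j ≤ 3 * K * coneSq (s i) (t j) (angCos (p i) (q j))) →
      ∑ i, ∑ j, M i j * F i j ≤ 3 * K * E := by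
    intro F hF
    rw [hE, Finset.mul_sum]
    refine Finset.sum_le_sum fun i _ => ?_
    rw [Finset.mul_sum]
    refine Finset.sum_le_sum fun j _ => ?_
    calc M i j * F i j ≤ M i j * (3 * K * coneSq (s i) (t j) (angCos (p i) (q j))) :=
          mul_le_mul_of_nonneg_left (hF i j) (hM i j)
      _ = _ := by ring
  have jA := iA.trans (mul_le_mul_of_nonneg_left (hsum _ uA) (by positivity))
  have jB := iB.trans (mul_le_mul_of_nonneg_left (hsum _ uB) (by positivity))
  have hsplit : ∑ i, ∑ j, coneSq (s i) (t j) (angCos (p i) (q j)) ≤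
      2 * (∑ i, ∑ j, coneSq ((1 - f (p i)) * s i) ((1 - f (q j)) * t j) (angCos (p i) (q j)) +
        ∑ i, ∑ j, coneSq (f (p i) * s i) (f (q j) * t j) (angCos (p i) (q j))) := by
    simp only [← Finset.sum_add_distrib, Finset.mul_sum]
    exact Finset.sum_le_sum fun i _ => Finset.sum_le_sum fun j _ => by
      simpa only [mul_add] using coneSq_le_split (f (p i)) (f (q j)) (angCos_le_one _ _)
        (Real.neg_one_le_cos _)
  have hstep := div_le_div_of_nonneg_right hsplit (by positivity : (0 : ℝ) ≤ (n : ℝ) ^ 2)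
  rw [mul_div_assoc, add_div] at hstep
  have hK4 : Real.pi ^ 4 / β ^ 4 = K ^ 2 := by rw [hK]; field_simp
  calc _ ≤ _ := hstep
    _ ≤ 2 * (GA.toReal / n * (3 * K * E) + GB.toReal / n * (3 * K * E)) := by gcongr
    _ = 6 * K * (GA.toReal + GB.toReal) / n * E := by ring
    _ ≤ 6 * K ^ 2 * (GA.toReal + GB.toReal) / n * E := by
      gcongr
      nlinarith
    _ = 6 * Real.pi ^ 4 * (GA.toReal + GB.toReal) / β ^ 4 / n * E := by
      rw [← hK4]; ring

end
end

section
/- There is a universal constant C ∈ (0,∞) such that the following holds. Let (X,d_X) be a metric space and let {A_i}_{i∈I} be subsets of X with X = ∪_{i∈I} A_i and d_X(A_i,A_j) ≥ π for all distinct i,j ∈ I. Then for every n ∈ ℕ, every n×n symmetric stochastic matrix M satisfies γ₊(M, d_{Cone(X)}²) ≤ C·sup_{i∈I} γ₊(M, d_{Cone(A_i)}²) and γ(M, d_{Cone(X)}²) ≤ C·sup_{i∈I} γ(M, d_{Cone(A_i)}²), where each Cone(A_i) is the Euclidean cone over A_i with the metric d_X restricted to A_i. -/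
/-!
Points of `Cone X` over different pieces `A i`, `A j` are at distance `s + t`, the sum of their
radii, so `Cone X` is the wedge of the cones `Cone (A i)` glued at their cusps. For an index `a`, let
`retract` send `Cone X` to the cone over `A a` by collapsing every other cone to the cusp. Summed over
the indices `a` that occur, the squared distances between images are the squared distance of the
original points if these lie in one cone, and `s² + t²` otherwise; as
`s² + t² ≤ (s + t)² ≤ 2 (s² + t²)`, this sum is comparable to the squared distance up to a factor `2`
(`sum_retract_le`, `le_two_mul_sum_retract`). Adding up the Poincaré inequalities of the cones over
the `A a` applied to the retracted points gives the theorem with `C = 2` (`poincare_of_pieces`).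
The cusp is not a point of `Cone (A a)`, so it is approached through points of radius `ε → 0`.
-/

/-!
Statement 12 (Lemma 4.2 of Mendel–Naor, π-separated unions of cones): there is a
universal constant `C` such that if `X = ⋃ᵢ Aᵢ` with `d_X(Aᵢ, Aⱼ) ≥ π` for all
`i ≠ j`, then every `n×n` symmetric stochastic matrix `M` satisfies
`γ₊(M, d_{Cone(X)}²) ≤ C·supᵢ γ₊(M, d_{Cone(Aᵢ)}²)` and
`γ(M, d_{Cone(X)}²) ≤ C·supᵢ γ(M, d_{Cone(Aᵢ)}²)`.

The Euclidean cone over a (sub)space is realized as `(0,∞) ×` that space, with the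
cone metric.
-/

open ENNReal

noncomputable section

/-- The nonlinear spectral gap quantity `γ(M, d_Z²)`. -/
def gammaM {n : ℕ} {Z : Type*} (M : Matrix (Fin n) (Fin n) ℝ) (dZ : Z → Z → ℝ) : ℝ≥0∞ :=
  sInf {γ : ℝ≥0∞ | ∀ x : Fin n → Z,
    (∑ i, ∑ j, sqd dZ (x i) (x j)) / (n : ℝ≥0∞) ^ 2 ≤
      γ / (n : ℝ≥0∞) * ∑ i, ∑ j, ENNReal.ofReal (M i j) * sqd dZ (x i) (x j)}

/-- The map of `Cone X` onto the cone over the `a`-th piece which collapses all other pieces to the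
cusp, the cusp being represented by radius `0` over the base point `b a`. Here `c x` is the index of
the piece chosen for `x`. -/
def retract {X I : Type*} (c : X → I) (b : I → X) (a : I) (p : Cone X) : ℝ × X :=
  open Classical in if c p.1.2 = a then p.1 else (0, b a)

lemma coneDist_zero_left {X : Type*} (d : X → X → ℝ) (x : X) (q : ℝ × X) (hq : 0 ≤ q.1) :
    coneDist d (0, x) q = q.1 := by
  simp [coneDist, Real.sqrt_sq hq]

lemma coneDist_zero_right {X : Type*} (d : X → X → ℝ) (x : X) (q : ℝ × X) (hq : 0 ≤ q.1) :
    coneDist d q (0, x) = q.1 := by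
  simp [coneDist, Real.sqrt_sq hq]

lemma coneDist_of_pi_le {X : Type*} (d : X → X → ℝ) (p q : ℝ × X) (hp : 0 ≤ p.1) (hq : 0 ≤ q.1)
    (h : Real.pi ≤ d p.2 q.2) : coneDist d p q = p.1 + q.1 := by
  rw [coneDist, min_eq_left h, Real.cos_pi,
    show p.1 ^ 2 + q.1 ^ 2 - 2 * p.1 * q.1 * -1 = (p.1 + q.1) ^ 2 by ring]
  exact Real.sqrt_sq (by positivity)

lemma sum_retract_of_eq {X I : Type*} [MetricSpace X] (c : X → I) (b : I → X) (S : Finset I)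
    (p q : Cone X) (hp : c p.1.2 ∈ S) (h : c p.1.2 = c q.1.2) :
    ∑ a ∈ S, sqd (coneDist dist) (retract c b a p) (retract c b a q) = sqd (coneD dist) p q := by
  rw [Finset.sum_eq_single_of_mem _ hp]
  · simp [retract, h, sqd, coneD]
  · intro a _ ha
    have h1 : c p.1.2 ≠ a := fun e => ha e.symm
    have h2 : c q.1.2 ≠ a := fun e => h1 (h.trans e)
    simp [retract, h1, h2, sqd, coneDist]

lemma sum_retract_of_ne {X I : Type*} [MetricSpace X] (c : X → I) (b : I → X) (S : Finset I)
    (p q : Cone X) (hp : c p.1.2 ∈ S) (hq : c q.1.2 ∈ S) (h : c p.1.2 ≠ c q.1.2) :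
    ∑ a ∈ S, sqd (coneDist dist) (retract c b a p) (retract c b a q) =
      ENNReal.ofReal p.1.1 ^ 2 + ENNReal.ofReal q.1.1 ^ 2 := by
  classical
  have key : ∀ a ∈ S, sqd (coneDist dist) (retract c b a p) (retract c b a q) =
      (if c p.1.2 = a then ENNReal.ofReal p.1.1 ^ 2 else 0) +
        (if c q.1.2 = a then ENNReal.ofReal q.1.1 ^ 2 else 0) := by
    intro a _
    by_cases h1 : c p.1.2 = a
    · have h2 : c q.1.2 ≠ a := fun e => h (h1.trans e.symm)
      simp [retract, h1, h2, sqd, coneDist_zero_right _ _ _ p.2.le]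
    · by_cases h2 : c q.1.2 = a
      · simp [retract, h1, h2, sqd, coneDist_zero_left _ _ _ q.2.le]
      · simp [retract, h1, h2, sqd, coneDist]
  rw [Finset.sum_congr rfl key, Finset.sum_add_distrib, Finset.sum_ite_eq, Finset.sum_ite_eq]
  simp [hp, hq]

lemma sqd_cone_of_ne {X I : Type*} [MetricSpace X] (c : X → I)
    (hc : ∀ x y, c x ≠ c y → Real.pi ≤ dist x y) (p q : Cone X) (h : c p.1.2 ≠ c q.1.2) :
    sqd (coneD dist) p q = (ENNReal.ofReal p.1.1 + ENNReal.ofReal q.1.1) ^ 2 := by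
  rw [sqd, coneD, coneDist_of_pi_le _ _ _ p.2.le q.2.le (hc _ _ h),
    ENNReal.ofReal_add p.2.le q.2.le]

lemma sum_retract_le {X I : Type*} [MetricSpace X] (c : X → I) (b : I → X)
    (hc : ∀ x y, c x ≠ c y → Real.pi ≤ dist x y) (S : Finset I)
    (p q : Cone X) (hp : c p.1.2 ∈ S) (hq : c q.1.2 ∈ S) :
    ∑ a ∈ S, sqd (coneDist dist) (retract c b a p) (retract c b a q) ≤ sqd (coneD dist) p q := by
  by_cases h : c p.1.2 = c q.1.2
  · exact (sum_retract_of_eq c b S p q hp h).le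
  · rw [sum_retract_of_ne c b S p q hp hq h, sqd_cone_of_ne c hc p q h, add_sq]
    gcongr
    exact le_self_add

lemma le_two_mul_sum_retract {X I : Type*} [MetricSpace X] (c : X → I) (b : I → X)
    (hc : ∀ x y, c x ≠ c y → Real.pi ≤ dist x y) (S : Finset I)
    (p q : Cone X) (hp : c p.1.2 ∈ S) (hq : c q.1.2 ∈ S) :
    sqd (coneD dist) p q ≤
      2 * ∑ a ∈ S, sqd (coneDist dist) (retract c b a p) (retract c b a q) := by
  by_cases h : c p.1.2 = c q.1.2
  · rw [sum_retract_of_eq c b S p q hp h, two_mul]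
    exact le_self_add
  · rw [sum_retract_of_ne c b S p q hp hq h, sqd_cone_of_ne c hc p q h]
    have := add_sq_le (a := p.1.1) (b := q.1.1)
    rw [← ENNReal.ofReal_add p.2.le q.2.le, ← ENNReal.ofReal_pow p.2.le,
      ← ENNReal.ofReal_pow q.2.le, ← ENNReal.ofReal_add (by positivity) (by positivity),
      ← ENNReal.ofReal_pow (add_nonneg p.2.le q.2.le),
      show (2 : ℝ≥0∞) = ENNReal.ofReal 2 by simp, ← ENNReal.ofReal_mul (by norm_num)]
    exact ENNReal.ofReal_le_ofReal this

lemma continuous_sqd_shift {X : Type*} [MetricSpace X] (u v : ℝ × X) :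
    Continuous fun ε : ℝ => sqd (coneDist dist) (u.1 + ε, u.2) (v.1 + ε, v.2) := by
  unfold sqd coneDist
  refine (ENNReal.continuous_pow 2).comp (ENNReal.continuous_ofReal.comp ?_)
  fun_prop

/-- If the Poincaré inequality with constant `K` holds for every image of the configuration `(x, y)`
in the cone over any one piece, then it holds for `(x, y)` itself with constant `2 * K`. Letting
one map `F` move `x` and `y` covers both `γ₊` and, for `x = y`, `γ`. -/
lemma poincare_of_pieces {X I : Type*} [MetricSpace X] (A : I → Set X)
    (hcov : (⋃ i, A i) = Set.univ)
    (hsep : ∀ i j : I, i ≠ j → ∀ a ∈ A i, ∀ b ∈ A j, Real.pi ≤ dist a b)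
    {n : ℕ} (M : Matrix (Fin n) (Fin n) ℝ) (K : ℝ≥0∞) (hK : K ≠ ⊤) (x y : Fin n → Cone X)
    (h : ∀ (a : I) (F : Cone X → ℝ × X), (∀ p, 0 < (F p).1) → (∀ p, (F p).2 ∈ A a) →
      (∑ i, ∑ j, sqd (coneDist dist) (F (x i)) (F (y j))) / (n : ℝ≥0∞) ^ 2 ≤
        K / (n : ℝ≥0∞) *
          ∑ i, ∑ j, ENNReal.ofReal (M i j) * sqd (coneDist dist) (F (x i)) (F (y j))) :
    (∑ i, ∑ j, sqd (coneD dist) (x i) (y j)) / (n : ℝ≥0∞) ^ 2 ≤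
      2 * K / (n : ℝ≥0∞) *
        ∑ i, ∑ j, ENNReal.ofReal (M i j) * sqd (coneD dist) (x i) (y j) := by
  classical
  rcases Nat.eq_zero_or_pos n with rfl | hn
  · simp
  have hn0 : (n : ℝ≥0∞) ≠ 0 := by exact_mod_cast hn.ne'
  have hmem : ∀ z : X, ∃ i, z ∈ A i := fun z => Set.mem_iUnion.1 (hcov ▸ Set.mem_univ z)
  choose c hcA using hmem
  have hc : ∀ z w, c z ≠ c w → Real.pi ≤ dist z w :=
    fun z w hzw => hsep _ _ hzw z (hcA z) w (hcA w)
  have : Nonempty X := ⟨(x ⟨0, hn⟩).1.2⟩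
  have hb : ∀ a, ∃ z, (A a).Nonempty → z ∈ A a := by
    intro a
    by_cases ha : (A a).Nonempty
    · exact ⟨ha.some, fun _ => ha.some_mem⟩
    · exact ⟨Classical.arbitrary X, fun h' => absurd h' ha⟩
  choose b hb using hb
  let S : Finset I := Finset.univ.image (fun i => c (x i).1.2) ∪
    Finset.univ.image (fun i => c (y i).1.2)
  have hxS : ∀ i, c (x i).1.2 ∈ S := fun i => by simp [S]
  have hyS : ∀ i, c (y i).1.2 ∈ S := fun i => by simp [S]
  have hS : ∀ a ∈ S, (A a).Nonempty := by
    intro a ha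
    simp only [S, Finset.mem_union, Finset.mem_image, Finset.mem_univ, true_and] at ha
    rcases ha with ⟨i, rfl⟩ | ⟨i, rfl⟩ <;> exact ⟨_, hcA _⟩
  have piece : ∀ a ∈ S,
      (∑ i, ∑ j, sqd (coneDist dist) (retract c b a (x i)) (retract c b a (y j))) /
          (n : ℝ≥0∞) ^ 2 ≤
        K / (n : ℝ≥0∞) * ∑ i, ∑ j, ENNReal.ofReal (M i j) *
          sqd (coneDist dist) (retract c b a (x i)) (retract c b a (y j)) := by
    intro a ha
    have hpos : ∀ p, 0 ≤ (retract c b a p).1 := by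
      intro p
      unfold retract
      split_ifs
      exacts [p.2.le, le_rfl]
    have hin : ∀ p, (retract c b a p).2 ∈ A a := by
      intro p
      unfold retract
      split_ifs with hp
      exacts [hp ▸ hcA _, hb a (hS a ha)]
    -- Enlarging all radii by `ε > 0` moves the points off the cusp; then `ε → 0`.
    have hε : ∀ ε : ℝ, 0 < ε → _ := fun ε hε =>
      h a (fun p => ((retract c b a p).1 + ε, (retract c b a p).2))
        (fun p => add_pos_of_nonneg_of_pos (hpos p) hε) hin
    have hcont : ∀ i j, Continuous fun ε : ℝ => sqd (coneDist dist)
        ((retract c b a (x i)).1 + ε, (retract c b a (x i)).2)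
        ((retract c b a (y j)).1 + ε, (retract c b a (y j)).2) :=
      fun i j => continuous_sqd_shift _ _
    have hL : Continuous fun ε : ℝ => (∑ i, ∑ j, sqd (coneDist dist)
        ((retract c b a (x i)).1 + ε, (retract c b a (x i)).2)
        ((retract c b a (y j)).1 + ε, (retract c b a (y j)).2)) / (n : ℝ≥0∞) ^ 2 :=
      (ENNReal.continuous_div_const _ (pow_ne_zero 2 hn0)).comp
        (continuous_finsetSum _ fun i _ => continuous_finsetSum _ fun j _ => hcont i j)
    have hR : Continuous fun ε : ℝ => K / (n : ℝ≥0∞) * ∑ i, ∑ j, ENNReal.ofReal (M i j) *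
        sqd (coneDist dist)
        ((retract c b a (x i)).1 + ε, (retract c b a (x i)).2)
        ((retract c b a (y j)).1 + ε, (retract c b a (y j)).2) :=
      (ENNReal.continuous_const_mul (ENNReal.div_ne_top hK hn0)).comp
        (continuous_finsetSum _ fun i _ => continuous_finsetSum _ fun j _ =>
          (ENNReal.continuous_const_mul ENNReal.ofReal_ne_top).comp (hcont i j))
    have := le_of_tendsto_of_tendsto
      ((hL.tendsto 0).mono_left (nhdsWithin_le_nhds (s := Set.Ioi 0)))
      ((hR.tendsto 0).mono_left (nhdsWithin_le_nhds (s := Set.Ioi 0)))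
      (Filter.eventually_of_mem self_mem_nhdsWithin hε)
    simpa using this
  calc (∑ i, ∑ j, sqd (coneD dist) (x i) (y j)) / (n : ℝ≥0∞) ^ 2
      ≤ (∑ i, ∑ j, 2 * ∑ a ∈ S, sqd (coneDist dist) (retract c b a (x i))
          (retract c b a (y j))) / (n : ℝ≥0∞) ^ 2 := by
        gcongr with i _ j _
        exact le_two_mul_sum_retract c b hc S _ _ (hxS i) (hyS j)
    _ = 2 * ∑ a ∈ S, (∑ i, ∑ j, sqd (coneDist dist) (retract c b a (x i))
          (retract c b a (y j))) / (n : ℝ≥0∞) ^ 2 := by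
        simp only [div_eq_mul_inv, ← Finset.mul_sum, ← Finset.sum_mul, mul_assoc]
        congr 2
        exact (Finset.sum_comm.trans (Finset.sum_congr rfl fun i _ => Finset.sum_comm)).symm
    _ ≤ 2 * ∑ a ∈ S, K / (n : ℝ≥0∞) * ∑ i, ∑ j, ENNReal.ofReal (M i j) *
          sqd (coneDist dist) (retract c b a (x i)) (retract c b a (y j)) := by
        gcongr with a ha
        exact piece a ha
    _ = 2 * K / (n : ℝ≥0∞) * ∑ i, ∑ j, ENNReal.ofReal (M i j) *
          ∑ a ∈ S, sqd (coneDist dist) (retract c b a (x i)) (retract c b a (y j)) := by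
        simp only [div_eq_mul_inv, Finset.mul_sum, mul_assoc]
        exact Finset.sum_comm.trans (Finset.sum_congr rfl fun i _ => Finset.sum_comm)
    _ ≤ _ := by
        gcongr with i _ j _
        exact sum_retract_le c b hc S _ _ (hxS i) (hyS j)

/-- To bound `u` by `2 * K` it suffices to bound it by `2 * K'` for finite `K' > K`. This avoids
showing that the infima defining `γ` and `γ₊` are attained. -/
lemma le_two_mul_of_forall_gt {u K : ℝ≥0∞} (h : ∀ K', K < K' → K' ≠ ⊤ → u ≤ 2 * K') :
    u ≤ 2 * K := by
  rw [mul_comm, ← ENNReal.div_le_iff_le_mul (by simp) (by simp)]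
  refine le_of_forall_gt_imp_ge_of_dense fun K' hK' => ?_
  by_cases ht : K' = ⊤
  · simp [ht]
  · rw [ENNReal.div_le_iff_le_mul (by simp) (by simp), mul_comm]
    exact h K' hK' ht

theorem statement12 :
    ∃ C : ℝ, 0 < C ∧
      ∀ (X : Type*) [MetricSpace X] (I : Type*) (A : I → Set X),
        (⋃ i, A i) = Set.univ →
        (∀ i j : I, i ≠ j → ∀ a ∈ A i, ∀ b ∈ A j, Real.pi ≤ dist a b) →
        ∀ (n : ℕ) (M : Matrix (Fin n) (Fin n) ℝ),
          M.IsSymm → (∀ i j, 0 ≤ M i j) → (∀ i, ∑ j, M i j = 1) →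
          (gammaPlusM M (coneD (dist : X → X → ℝ)) ≤
              ENNReal.ofReal C *
                ⨆ i, gammaPlusM M (coneD (dist : ↥(A i) → ↥(A i) → ℝ))) ∧
            gammaM M (coneD (dist : X → X → ℝ)) ≤
              ENNReal.ofReal C *
                ⨆ i, gammaM M (coneD (dist : ↥(A i) → ↥(A i) → ℝ)) := by
  refine ⟨2, by norm_num, ?_⟩
  intro X _ I A hcov hsep n M _ _ _
  rw [show ENNReal.ofReal 2 = 2 by simp]
  constructor
  · refine le_two_mul_of_forall_gt fun K hK hKt => sInf_le fun x y => ?_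
    refine poincare_of_pieces A hcov hsep M K hKt x y fun a F hpos hin => ?_
    obtain ⟨γ, hγ, hγK⟩ := sInf_lt_iff.1 ((le_iSup (fun i =>
      gammaPlusM M (coneD (dist : ↥(A i) → ↥(A i) → ℝ))) a).trans_lt hK)
    let G : Cone X → Cone (A a) := fun p => ⟨((F p).1, ⟨(F p).2, hin p⟩), hpos p⟩
    exact (hγ (fun i => G (x i)) (fun i => G (y i))).trans (by gcongr; exact le_rfl)
  · refine le_two_mul_of_forall_gt fun K hK hKt => sInf_le fun x => ?_
    refine poincare_of_pieces A hcov hsep M K hKt x x fun a F hpos hin => ?_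
    obtain ⟨γ, hγ, hγK⟩ := sInf_lt_iff.1 ((le_iSup (fun i =>
      gammaM M (coneD (dist : ↥(A i) → ↥(A i) → ℝ))) a).trans_lt hK)
    let G : Cone X → Cone (A a) := fun p => ⟨((F p).1, ⟨(F p).2, hin p⟩), hpos p⟩
    exact (hγ (fun i => G (x i))).trans (by gcongr; exact le_rfl)

end
end

section
/- Fix λ,κ ∈ (0,∞) and n ∈ ℕ. Let (A,d_A), (B,d_B) and (X,d_X) be metric spaces, and suppose there exist λ-Lipschitz mappings 𝔞 : X → A and 𝔟 : X → B such that √(d_A(𝔞(x),𝔞(y))² + d_B(𝔟(x),𝔟(y))²) ≥ d_X(x,y)/κ for every x,y ∈ X. Then every n×n symmetric stochastic matrix M satisfies γ₊(M,d_X²) ≤ (κλ)²·(γ₊(M,d_A²) + γ₊(M,d_B²)). -/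
/-!
Since `𝔞` and `𝔟` are `λ`-Lipschitz and jointly expand up to the factor `1/κ`, squared distances satisfy
`d_X² ≤ κ² (d_A² + d_B²)`, `d_A² ≤ λ² d_X²` and `d_B² ≤ λ² d_X²`. Hence, for every admissible `γ_A` in the
definition of `γ₊(M, d_A²)` and every admissible `γ_B` in that of `γ₊(M, d_B²)`, the Poincaré inequalities
for the image configurations under `𝔞` and `𝔟` add up to one for `X` with constant `(κλ)² (γ_A + γ_B)`.
Taking infima over `γ_A` and `γ_B` gives the bound.
-/

/-!
Statement 13 (Lemma 3.10 of Mendel–Naor): if `𝔞 : X → A` and `𝔟 : X → B` are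
`λ`-Lipschitz and `√(d_A(𝔞x,𝔞y)² + d_B(𝔟x,𝔟y)²) ≥ d_X(x,y)/κ`, then every
symmetric stochastic matrix `M` satisfies
`γ₊(M, d_X²) ≤ (κλ)²·(γ₊(M, d_A²) + γ₊(M, d_B²))`.
-/

open ENNReal

noncomputable section

/-- The Lipschitz condition in terms of squared distances. -/
lemma sqd_map_le {X A : Type*} [MetricSpace A] [MetricSpace X] {lam : ℝ} (hlam : 0 < lam)
    {a : X → A} (ha : ∀ x y : X, dist (a x) (a y) ≤ lam * dist x y) (x y : X) :
    sqd dist (a x) (a y) ≤ ENNReal.ofReal lam ^ 2 * sqd dist x y := by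
  unfold sqd
  rw [← mul_pow, ← ENNReal.ofReal_mul hlam.le]
  gcongr
  exact ha x y

/-- The joint lower bound on `(a, b)` in terms of squared distances. -/
lemma sqd_le_add {X A B : Type*} [MetricSpace A] [MetricSpace B] [MetricSpace X]
    {kap : ℝ} (hkap : 0 < kap) {a : X → A} {b : X → B}
    (hlow : ∀ x y : X,
      dist x y / kap ≤ Real.sqrt (dist (a x) (a y) ^ 2 + dist (b x) (b y) ^ 2)) (x y : X) :
    sqd dist x y ≤
      ENNReal.ofReal kap ^ 2 * (sqd dist (a x) (a y) + sqd dist (b x) (b y)) := by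
  unfold sqd
  rw [← ENNReal.ofReal_pow dist_nonneg, ← ENNReal.ofReal_pow dist_nonneg,
    ← ENNReal.ofReal_pow dist_nonneg, ← ENNReal.ofReal_pow hkap.le,
    ← ENNReal.ofReal_add (by positivity) (by positivity), ← ENNReal.ofReal_mul (by positivity)]
  apply ENNReal.ofReal_le_ofReal
  have h2 : (dist x y / kap) ^ 2 ≤ dist (a x) (a y) ^ 2 + dist (b x) (b y) ^ 2 :=
    (Real.le_sqrt (by positivity) (by positivity)).1 (hlow x y)
  rwa [div_pow, div_le_iff₀' (by positivity)] at h2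

/-- The Lipschitz condition carried to the `M`-weighted energies of two configurations. -/
lemma energy_map_le {X A : Type*} [MetricSpace A] [MetricSpace X] {lam : ℝ} (hlam : 0 < lam)
    {a : X → A} (ha : ∀ x y : X, dist (a x) (a y) ≤ lam * dist x y) {n : ℕ}
    (M : Matrix (Fin n) (Fin n) ℝ) (x y : Fin n → X) :
    ∑ i, ∑ j, ENNReal.ofReal (M i j) * sqd dist (a (x i)) (a (y j)) ≤
      ENNReal.ofReal lam ^ 2 * ∑ i, ∑ j, ENNReal.ofReal (M i j) * sqd dist (x i) (y j) := by
  simp only [Finset.mul_sum]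
  refine Finset.sum_le_sum fun i _ => Finset.sum_le_sum fun j _ => ?_
  rw [mul_left_comm]
  gcongr
  exact sqd_map_le hlam ha _ _

theorem statement13 {A B X : Type*} [MetricSpace A] [MetricSpace B] [MetricSpace X]
    (lam kap : ℝ) (hlam : 0 < lam) (hkap : 0 < kap) (n : ℕ)
    (a : X → A) (b : X → B)
    (ha : ∀ x y : X, dist (a x) (a y) ≤ lam * dist x y)
    (hb : ∀ x y : X, dist (b x) (b y) ≤ lam * dist x y)
    (hlow : ∀ x y : X,
      dist x y / kap ≤ Real.sqrt (dist (a x) (a y) ^ 2 + dist (b x) (b y) ^ 2))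
    (M : Matrix (Fin n) (Fin n) ℝ)
    (hsymm : M.IsSymm) (hnn : ∀ i j, 0 ≤ M i j) (hrow : ∀ i, ∑ j, M i j = 1) :
    gammaPlusM M (dist : X → X → ℝ) ≤
      ENNReal.ofReal ((kap * lam) ^ 2) *
        (gammaPlusM M (dist : A → A → ℝ) + gammaPlusM M (dist : B → B → ℝ)) := by
  have hC0 : ENNReal.ofReal ((kap * lam) ^ 2) ≠ 0 :=
    (ENNReal.ofReal_pos.2 (by positivity)).ne'
  have hCeq : ENNReal.ofReal ((kap * lam) ^ 2) =
      ENNReal.ofReal kap ^ 2 * ENNReal.ofReal lam ^ 2 := by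
    rw [ENNReal.ofReal_pow (by positivity), ENNReal.ofReal_mul hkap.le, mul_pow]
  rw [mul_comm, ← ENNReal.div_le_iff hC0 ENNReal.ofReal_ne_top]
  -- Truncated subtraction reduces each infimum to a bound for every admissible constant.
  rw [← tsub_le_iff_right]
  refine le_sInf fun gA hA => ?_
  rw [tsub_le_iff_right, ← tsub_le_iff_left]
  refine le_sInf fun gB hB => ?_
  rw [tsub_le_iff_left, ENNReal.div_le_iff hC0 ENNReal.ofReal_ne_top, mul_comm]
  refine sInf_le fun x y => ?_
  have h1 := hA (fun i => a (x i)) (fun i => a (y i))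
  have h2 := hB (fun i => b (x i)) (fun i => b (y i))
  calc (∑ i, ∑ j, sqd dist (x i) (y j)) / (n : ℝ≥0∞) ^ 2
      ≤ (∑ i, ∑ j, ENNReal.ofReal kap ^ 2 *
          (sqd dist (a (x i)) (a (y j)) + sqd dist (b (x i)) (b (y j)))) / (n : ℝ≥0∞) ^ 2 := by
        gcongr
        exact sqd_le_add hkap hlow _ _
    _ = ENNReal.ofReal kap ^ 2 *
          ((∑ i, ∑ j, sqd dist (a (x i)) (a (y j))) / (n : ℝ≥0∞) ^ 2 +
            (∑ i, ∑ j, sqd dist (b (x i)) (b (y j))) / (n : ℝ≥0∞) ^ 2) := by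
        simp only [← Finset.mul_sum, Finset.sum_add_distrib, div_eq_mul_inv]
        ring
    _ ≤ ENNReal.ofReal kap ^ 2 *
          (gA / n * (ENNReal.ofReal lam ^ 2 *
              ∑ i, ∑ j, ENNReal.ofReal (M i j) * sqd dist (x i) (y j)) +
            gB / n * (ENNReal.ofReal lam ^ 2 *
              ∑ i, ∑ j, ENNReal.ofReal (M i j) * sqd dist (x i) (y j))) := by
        gcongr
        · exact h1.trans (by gcongr; exact energy_map_le hlam ha M x y)
        · exact h2.trans (by gcongr; exact energy_map_le hlam hb M x y)
    _ = ENNReal.ofReal ((kap * lam) ^ 2) * (gA + gB) / n *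
          ∑ i, ∑ j, ENNReal.ofReal (M i j) * sqd dist (x i) (y j) := by
        rw [hCeq]
        simp only [div_eq_mul_inv]
        ring

end
end
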